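/- Let γ : ℝ → ℂ be a smooth curve parametrized by arclength with γ(t) ≠ 0 for all t, satisfying the Anciaux equation γ''(t) = ⟨γ'(t), i·γ(t)⟩·((|γ(t)|² − 1)/|γ(t)|²) · i·γ'(t). Set r(t) = |γ(t)| (which is differentiable with r'(t) = ⟨γ(t), γ'(t)⟩/r(t)). Then the function t ↦ r(t)⁴·(1 − r'(t)²)·e^{−r(t)²} is constant on ℝ, equal to E² where E = |γ(0)|·⟨γ'(0), i·γ(0)⟩·e^{−|γ(0)|²/2}. -/

import Mathlib

/-- Real inner product on ℂ ≅ ℝ²: ⟨u,v⟩ = Re(u · conj v). -/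
noncomputable def rinner (u v : ℂ) : ℝ := u.re * v.re + u.im * v.im

open scoped InnerProductSpace

/-!
The Hermitian product `⟪γ, γ'⟫_ℂ` carries both quantities in play: its real part is `r r'`, and its
imaginary part is the angular momentum `w = ⟨γ', iγ⟩`. Under the Anciaux equation
`w' = w (r - 1 / r) r'`, so `r w exp (-r ^ 2 / 2)` is constant. In `ℂ`, `‖⟪γ, γ'⟫_ℂ‖ = r ‖γ'‖` gives
`w ^ 2 = r ^ 2 (‖γ'‖ ^ 2 - r' ^ 2)`, and the square of the constant takes the claimed form.
-/

theorem hasDerivAt_mul_mul_exp_neg_sq_half {r w : ℝ → ℝ} {r' t : ℝ} (hr : HasDerivAt r r' t)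
    (hrt : r t ≠ 0) (hw : HasDerivAt w (w t * ((r t ^ 2 - 1) / r t) * r') t) :
    HasDerivAt (fun s => r s * w s * Real.exp (-r s ^ 2 / 2)) 0 t := by
  have hexp : HasDerivAt (fun s => Real.exp (-r s ^ 2 / 2))
      (Real.exp (-r t ^ 2 / 2) * (-(r t * r'))) t :=
    (((hr.fun_pow 2).fun_neg.div_const 2).congr_deriv (by push_cast; ring)).exp
  refine ((hr.fun_mul hw).fun_mul hexp).congr_deriv ?_
  field_simp
  ring

theorem hasDerivAt_norm_of_ne_zero (𝕜 : Type*) {E : Type*} [RCLike 𝕜] [NormedAddCommGroup E]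
    [InnerProductSpace 𝕜 E] [NormedSpace ℝ E] {γ : ℝ → E} {γ' : E} {t : ℝ}
    (hγ : HasDerivAt γ γ' t) (hne : γ t ≠ 0) :
    HasDerivAt (fun s => ‖γ s‖) (RCLike.re ⟪γ t, γ'⟫_𝕜 / ‖γ t‖) t := by
  have hsq : HasDerivAt (fun s => ‖γ s‖ ^ 2) (2 * RCLike.re ⟪γ t, γ'⟫_𝕜) t := by
    simpa [Function.comp_def, inner_self_eq_norm_sq (𝕜 := 𝕜), inner_re_symm γ', two_mul]
      using (RCLike.reCLM (K := 𝕜)).hasFDerivAt.comp_hasDerivAt t (hγ.inner 𝕜 hγ)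
  have hnorm_ne : ‖γ t‖ ^ 2 ≠ 0 := pow_ne_zero 2 (norm_ne_zero_iff.2 hne)
  simpa [Real.sqrt_sq, mul_div_mul_left] using hsq.sqrt hnorm_ne

section Hermitian

variable {V : Type*} [NormedAddCommGroup V] [InnerProductSpace ℂ V]

theorem hasDerivAt_im_inner_of_deriv_eq_smul_I {γ v : ℝ → V} {κ t : ℝ}
    (hγ : HasDerivAt γ (v t) t) (hv : HasDerivAt v (κ • Complex.I • v t) t) :
    HasDerivAt (fun s => (⟪γ s, v s⟫_ℂ).im) (κ * (⟪γ t, v t⟫_ℂ).re) t := by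
  have him := Complex.imCLM.hasFDerivAt.comp_hasDerivAt t (hγ.inner ℂ hv)
  refine him.congr_deriv ?_
  have hvv : (⟪v t, v t⟫_ℂ).im = 0 := inner_self_im (𝕜 := ℂ) (v t)
  simp [inner_smul_right, inner_smul_right_eq_smul, hvv, -inner_self_eq_norm_sq_to_K]

/-- The force field `F` of the Anciaux equation `γ'' = F(γ, γ')`, for curves in an arbitrary complex
inner product space; `(⟪x, v⟫_ℂ).im` is the real inner product of `v` with `i x`. -/
noncomputable def anciauxForce (x v : V) : V :=
  ((⟪x, v⟫_ℂ).im * ((‖x‖ ^ 2 - 1) / ‖x‖ ^ 2)) • Complex.I • v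

/-- The first integral `E` of the Anciaux equation, as a function of position and velocity. -/
noncomputable def anciauxIntegral (x v : V) : ℝ :=
  ‖x‖ * (⟪x, v⟫_ℂ).im * Real.exp (-‖x‖ ^ 2 / 2)

theorem hasDerivAt_anciauxIntegral {γ v : ℝ → V} {t : ℝ} (hne : γ t ≠ 0)
    (hγ : HasDerivAt γ (v t) t) (hv : HasDerivAt v (anciauxForce (γ t) (v t)) t) :
    HasDerivAt (fun s => anciauxIntegral (γ s) (v s)) 0 t := by
  have hnorm_ne : ‖γ t‖ ≠ 0 := norm_ne_zero_iff.2 hne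
  refine hasDerivAt_mul_mul_exp_neg_sq_half (hasDerivAt_norm_of_ne_zero ℂ hγ hne) hnorm_ne
    ((hasDerivAt_im_inner_of_deriv_eq_smul_I hγ hv).congr_deriv ?_)
  simp only [RCLike.re_eq_complex_re]
  field_simp

theorem anciauxIntegral_eq_of_hasDerivAt {γ v : ℝ → V} (hne : ∀ t, γ t ≠ 0)
    (hγ : ∀ t, HasDerivAt γ (v t) t) (hv : ∀ t, HasDerivAt v (anciauxForce (γ t) (v t)) t)
    (s t : ℝ) : anciauxIntegral (γ s) (v s) = anciauxIntegral (γ t) (v t) :=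
  have hderiv u := hasDerivAt_anciauxIntegral (hne u) (hγ u) (hv u)
  is_const_of_deriv_eq_zero (fun u => (hderiv u).differentiableAt) (fun u => (hderiv u).deriv) s t

end Hermitian

theorem anciauxIntegral_sq {x : ℂ} (hx : x ≠ 0) (v : ℂ) :
    anciauxIntegral x v ^ 2 =
      ‖x‖ ^ 4 * (‖v‖ ^ 2 - ((⟪x, v⟫_ℂ).re / ‖x‖) ^ 2) * Real.exp (-‖x‖ ^ 2) := by
  have him : (⟪x, v⟫_ℂ).im ^ 2 = (‖x‖ * ‖v‖) ^ 2 - (⟪x, v⟫_ℂ).re ^ 2 := by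
    rw [← Complex.sq_norm_sub_sq_re, RCLike.inner_apply, norm_mul, RCLike.norm_conj, mul_comm ‖v‖]
  have hexp : Real.exp (-‖x‖ ^ 2 / 2) ^ 2 = Real.exp (-‖x‖ ^ 2) := by
    rw [← Real.exp_nat_mul]
    congr 1
    push_cast
    ring
  have hnorm_ne : ‖x‖ ≠ 0 := norm_ne_zero_iff.2 hx
  rw [anciauxIntegral, mul_pow, mul_pow, him, hexp]
  field_simp

theorem rinner_eq_re_inner (u v : ℂ) : rinner u v = (⟪u, v⟫_ℂ).re := by
  simp [rinner, mul_comm]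

theorem rinner_I_mul_eq_im_inner (u v : ℂ) : rinner u (Complex.I * v) = (⟪v, u⟫_ℂ).im := by
  simp [rinner]

theorem anciaux_first_integral_general (γ : ℝ → ℂ) (hγ : Differentiable ℝ γ)
    (hγ' : Differentiable ℝ (deriv γ)) (hne : ∀ t, γ t ≠ 0)
    (hAnc : ∀ t, deriv (deriv γ) t =
      (rinner (deriv γ t) (Complex.I * γ t) * ((‖γ t‖ ^ 2 - 1) / ‖γ t‖ ^ 2))
        • (Complex.I * deriv γ t)) :
    (∀ t, HasDerivAt (fun u => ‖γ u‖) (rinner (γ t) (deriv γ t) / ‖γ t‖) t) ∧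
    (∀ t, ‖γ t‖ ^ 4 * (‖deriv γ t‖ ^ 2 - (deriv (fun u => ‖γ u‖) t) ^ 2)
          * Real.exp (-‖γ t‖ ^ 2)
        = (‖γ 0‖ * rinner (deriv γ 0) (Complex.I * γ 0)
            * Real.exp (-‖γ 0‖ ^ 2 / 2)) ^ 2) := by
  simp only [rinner_I_mul_eq_im_inner] at hAnc ⊢
  simp only [rinner_eq_re_inner]
  have hnorm t := hasDerivAt_norm_of_ne_zero ℂ (hγ t).hasDerivAt (hne t)
  have hforce t : HasDerivAt (deriv γ) (anciauxForce (γ t) (deriv γ t)) t :=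
    (hγ' t).hasDerivAt.congr_deriv (hAnc t)
  have hconst t : anciauxIntegral (γ t) (deriv γ t) = anciauxIntegral (γ 0) (deriv γ 0) :=
    anciauxIntegral_eq_of_hasDerivAt hne (fun s => (hγ s).hasDerivAt) hforce t 0
  refine ⟨hnorm, fun t => ?_⟩
  calc
    _ = anciauxIntegral (γ t) (deriv γ t) ^ 2 := by
      rw [(hnorm t).deriv, anciauxIntegral_sq (hne t), RCLike.re_eq_complex_re]
    _ = anciauxIntegral (γ 0) (deriv γ 0) ^ 2 := by rw [hconst t]

/-- For a nonvanishing smooth arclength-parametrized curve satisfying the Anciaux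
equation, with r = |γ| (differentiable with r' = ⟨γ,γ'⟩/r), the quantity
r⁴(1 - r'²)e^{-r²} is constant, equal to E² with E = |γ(0)|⟨γ'(0), iγ(0)⟩e^{-|γ(0)|²/2}. -/
theorem anciaux_first_integral (γ : ℝ → ℂ) (hsmooth : ContDiff ℝ (⊤ : ℕ∞) γ)
    (harc : ∀ t, ‖deriv γ t‖ = 1) (hne : ∀ t, γ t ≠ 0)
    (hAnc : ∀ t, deriv (deriv γ) t =
      (rinner (deriv γ t) (Complex.I * γ t) * ((‖γ t‖ ^ 2 - 1) / ‖γ t‖ ^ 2))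
        • (Complex.I * deriv γ t)) :
    (∀ t, HasDerivAt (fun u => ‖γ u‖) (rinner (γ t) (deriv γ t) / ‖γ t‖) t) ∧
    (∀ t, ‖γ t‖ ^ 4 * (1 - (deriv (fun u => ‖γ u‖) t) ^ 2) * Real.exp (-‖γ t‖ ^ 2)
        = (‖γ 0‖ * rinner (deriv γ 0) (Complex.I * γ 0)
            * Real.exp (-‖γ 0‖ ^ 2 / 2)) ^ 2) := by
  obtain ⟨hγ, hγ'⟩ := contDiff_infty_iff_deriv.1 hsmooth
  simpa [harc] using anciaux_first_integral_general γ hγ (hγ'.differentiable (by simp)) hne hAnc
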